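/- Fix ρ = 1/√2 and ν = π/2 + nπ for some integer n. Then for every real number x, lim_{t→∞} Σ_{y ∈ ℤ, y ≤ x·t} P(X_t = y) = ∫_{−∞}^{x} g(y) dy, where g(y) = Θ_n(y) / (π(1−y²)√(1−2y²)) for y ∈ (−1/√2, 1/√2) and g(y) = 0 otherwise, with Θ_n(y) = 1 + {|α|² − |β|² + (−1)ⁿ·2 Im(α·conj(β))}·y. -/

import Mathlib

open Real Filter Topology MeasureTheory

noncomputable section

/-- `ρ₀ = √(1-ρ²)`. -/
def rz (ρ : ℝ) : ℝ := Real.sqrt (1 - ρ ^ 2)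

/-- `α₀ = ρ e^{iν}`. -/
def az (ρ ν : ℝ) : ℂ := (ρ : ℂ) * Complex.exp (Complex.I * (ν : ℂ))

/-- `B₋`. -/
def Bm (ρ ν : ℝ) : Matrix (Fin 2) (Fin 2) ℂ :=
  !![0, 0; ((rz ρ) ^ 2 : ℝ), ((rz ρ : ℝ) : ℂ) * (starRingEnd ℂ) (az ρ ν)]

/-- `B₀`. -/
def B0 (ρ ν : ℝ) : Matrix (Fin 2) (Fin 2) ℂ :=
  !![-(az ρ ν) * ((rz ρ : ℝ) : ℂ), -((ρ ^ 2 : ℝ) : ℂ);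
      -((ρ ^ 2 : ℝ) : ℂ), ((rz ρ : ℝ) : ℂ) * (starRingEnd ℂ) (az ρ ν)]

/-- `B₊`. -/
def Bp (ρ ν : ℝ) : Matrix (Fin 2) (Fin 2) ℂ :=
  !![-(az ρ ν) * ((rz ρ : ℝ) : ℂ), (((rz ρ) ^ 2 : ℝ) : ℂ); 0, 0]

/-- The quantum walk `Ψ_t : ℤ → ℂ²`. -/
def qwalk (ρ ν : ℝ) (α β : ℂ) : ℕ → ℤ → Fin 2 → ℂ
  | 0, x => if x = 0 then ![α, β] else 0
  | t + 1, x =>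
      (Bm ρ ν).mulVec (qwalk ρ ν α β t (x + 1)) + (B0 ρ ν).mulVec (qwalk ρ ν α β t x)
        + (Bp ρ ν).mulVec (qwalk ρ ν α β t (x - 1))

/-- `P(X_t = x) = ‖Ψ_t(x)‖²`. -/
def qprob (ρ ν : ℝ) (α β : ℂ) (t : ℕ) (x : ℤ) : ℝ :=
  ‖qwalk ρ ν α β t x 0‖ ^ 2 + ‖qwalk ρ ν α β t x 1‖ ^ 2

/-- `Θ_n(y) = 1 + {|α|² − |β|² + (−1)ⁿ·2 Im(α·conj(β))}·y`. -/
def Theta (n : ℤ) (α β : ℂ) (y : ℝ) : ℝ :=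
  1 + (‖α‖ ^ 2 - ‖β‖ ^ 2
    + (-1 : ℝ) ^ n * 2 * (α * (starRingEnd ℂ) β).im) * y

/-- The limit density `g` at the exceptional parameters. -/
def densStd (n : ℤ) (α β : ℂ) (y : ℝ) : ℝ :=
  if y ∈ Set.Ioo (-(1 / Real.sqrt 2)) (1 / Real.sqrt 2) then
    Theta n α β y / (π * (1 - y ^ 2) * Real.sqrt (1 - 2 * y ^ 2))
  else 0

/-!
In momentum space one step of the walk multiplies by a unitary `2 × 2` symbol `U(θ)`, and Parseval's
identity writes the characteristic function of `X_t / t` as the mean over `θ` of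
`⟪U(θ)ᵗ v, U(θ + ξ / 2t)ᵗ v⟫`, where `v` is the initial state. At the exceptional parameters
`U(θ) = -i(-1)ⁿ (cos²θ + sin θ √(1 + cos²θ) J(θ))` with `J(θ)` skew-adjoint and `J(θ)² = -1`, so up
to a constant phase `U(θ)` lies in the copy `ℝ[J(θ)]` of `ℂ` and its powers are powers of a scalar
`e^{iω(θ)}` on the unit circle. Since `J` is continuous, the integrand converges to
`⟪v, exp(ξ w J(θ)) v⟫`, where `w = cos θ / √(1 + cos²θ)` is the group velocity. Up to terms that
are odd under the reflection `θ ↦ π - θ` this equals `(1 + c w) exp(iξw)`, with `c` the slope of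
`Θ_n`, and the substitution `y = w(θ)` turns its mean into the characteristic function of the
claimed density. Lévy's continuity theorem concludes.
-/

section Limits

lemma intervalIntegral_eq_zero_of_comp_sub_eq_neg {E : Type*} [NormedAddCommGroup E]
    [NormedSpace ℝ E] {f : ℝ → E} {a b : ℝ} (hf : ∀ x, f (a + b - x) = -f x) :
    ∫ x in a..b, f x = 0 := by
  have h : ∫ x in a..b, f x = -∫ x in a..b, f x := by
    rw [← intervalIntegral.integral_neg]
    simpa [hf] using (intervalIntegral.integral_comp_sub_left f (a + b) (a := a) (b := b)).symm
  have := IsAddTorsionFree.of_isTorsionFree ℝ E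
  exact self_eq_neg.1 h

lemma tendsto_pow_comp_add_div_of_hasDerivAt {f : ℝ → ℂ} {f' : ℂ} {x : ℝ}
    (hf : HasDerivAt f f' x) (hx : f x = 1) (η : ℝ) :
    Tendsto (fun t : ℕ => f (x + η / t) ^ t) atTop (𝓝 (Complex.exp (η * f'))) := by
  have hg : HasDerivAt (fun u : ℝ => f (x + η * u)) (η * f') 0 := by
    have hline : HasDerivAt (fun u : ℝ => x + η * u) η 0 := by
      simpa using ((hasDerivAt_id (0 : ℝ)).const_mul η).const_add x
    simpa [Function.comp_def] using HasDerivAt.scomp (0 : ℝ) (g₁ := f) (by simpa using hf) hline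
  have hinv : Tendsto (fun t : ℕ => (t : ℝ)⁻¹) atTop (𝓝[≠] 0) :=
    (tendsto_inv_atTop_nhdsGT_zero.mono_right (nhdsGT_le_nhdsNE _)).comp tendsto_natCast_atTop_atTop
  have hslope : Tendsto (fun t : ℕ => (t : ℂ) * (f (x + η / t) - 1)) atTop (𝓝 (η * f')) := by
    simpa [Function.comp_def, slope, hx, div_eq_mul_inv] using
      (hasDerivAt_iff_tendsto_slope.1 hg).comp hinv
  simpa using Complex.tendsto_one_add_pow_exp_of_tendsto hslope

lemma tendsto_measureReal_Iic_of_tendsto_charFun {μs : ℕ → Measure ℝ} {μ : Measure ℝ}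
    [∀ t, IsProbabilityMeasure (μs t)] [IsProbabilityMeasure μ] [NullSingletonClass μ]
    (h : ∀ ξ, Tendsto (fun t => charFun (μs t) ξ) atTop (𝓝 (charFun μ ξ))) (x : ℝ) :
    Tendsto (fun t => (μs t).real (Set.Iic x)) atTop (𝓝 (μ.real (Set.Iic x))) := by
  have hweak : Tendsto (β := ProbabilityMeasure ℝ) (fun t => ⟨μs t, inferInstance⟩) atTop
      (𝓝 ⟨μ, inferInstance⟩) :=
    ProbabilityMeasure.tendsto_iff_tendsto_charFun.2 h
  have hfrontier : μ (frontier (Set.Iic x)) = 0 := by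
    rw [frontier_Iic, measure_singleton]
  exact (ENNReal.tendsto_toReal (measure_ne_top μ _)).comp
    (ProbabilityMeasure.tendsto_measure_of_null_frontier_of_tendsto' hweak hfrontier)

end Limits

section Parseval

lemma integral_exp_two_mul_I_mul_intCast (m : ℤ) :
    ∫ θ in (0 : ℝ)..π, Complex.exp (2 * Complex.I * θ * m) = if m = 0 then (π : ℂ) else 0 := by
  split_ifs with hm
  · simp [hm]
  · have hc : 2 * Complex.I * m ≠ 0 := by simp [hm]
    have hexp : Complex.exp (2 * Complex.I * m * π) = 1 :=
      Complex.exp_eq_one_iff.2 ⟨m, by ring⟩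
    simp [fun θ : ℝ => mul_right_comm (2 * Complex.I) (θ : ℂ) m, integral_exp_mul_complex hc, hexp]

lemma integral_inner_sum_exp_smul {E : Type*} [NormedAddCommGroup E] [InnerProductSpace ℂ E]
    (S : Finset ℤ) (f g : ℤ → E) :
    ∫ θ in (0 : ℝ)..π, inner ℂ (∑ x ∈ S, Complex.exp (2 * Complex.I * θ * x) • f x)
        (∑ x ∈ S, Complex.exp (2 * Complex.I * θ * x) • g x)
      = π * ∑ x ∈ S, inner ℂ (f x) (g x) := by
  have hphase (θ : ℝ) (x y : ℤ) :
      inner ℂ (Complex.exp (2 * Complex.I * θ * x) • f x)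
          (Complex.exp (2 * Complex.I * θ * y) • g y)
        = inner ℂ (f x) (g y) * Complex.exp (2 * Complex.I * θ * (y - x : ℤ)) := by
    have hexp : (starRingEnd ℂ) (Complex.exp (2 * Complex.I * θ * x))
        * Complex.exp (2 * Complex.I * θ * y) = Complex.exp (2 * Complex.I * θ * (y - x : ℤ)) := by
      rw [← Complex.exp_conj, ← Complex.exp_add]
      simp only [map_mul, Complex.conj_I, Complex.conj_ofReal, map_intCast, map_ofNat]
      push_cast
      ring_nf
    rw [inner_smul_left, inner_smul_right, ← hexp]
    ring
  simp_rw [sum_inner, inner_sum, hphase]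
  rw [intervalIntegral.integral_finsetSum fun x _ => by
    apply Continuous.intervalIntegrable; fun_prop, Finset.mul_sum]
  refine Finset.sum_congr rfl fun x hx => ?_
  rw [intervalIntegral.integral_finsetSum fun y _ => by
    apply Continuous.intervalIntegrable; fun_prop]
  simp_rw [intervalIntegral.integral_const_mul, integral_exp_two_mul_I_mul_intCast, sub_eq_zero,
    mul_ite, mul_zero, Finset.sum_ite_eq', if_pos hx, mul_comm]

end Parseval

section SkewRoot

open Complex (liftAux liftAux_apply)

variable {A : Type*} [NormedRing A] [NormedAlgebra ℝ A]

lemma continuous_liftAux {J : A} (hJ : J * J = -1) : Continuous (liftAux J hJ) := by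
  simp only [funext_iff.2 (liftAux_apply J hJ), Algebra.algebraMap_eq_smul_one]
  fun_prop

variable [StarRing A] [StarModule ℝ A]

lemma star_liftAux {J : A} (hJ : J * J = -1) (hJ' : star J = -J) (z : ℂ) :
    star (liftAux J hJ z) = liftAux J hJ (star z) := by
  simp [liftAux_apply, Algebra.algebraMap_eq_smul_one, hJ']

lemma tendsto_star_liftAux_mul_liftAux {ι : Type*} {l : Filter ι} {J₀ : A} {J : ι → A}
    (hJ₀ : J₀ * J₀ = -1) (hJ₀' : star J₀ = -J₀) (hJ : ∀ i, J i * J i = -1)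
    (hlim : Tendsto J l (𝓝 J₀)) {z w : ι → ℂ} {u : ℂ} (hz : ∀ i, ‖z i‖ = 1) (hw : ∀ i, ‖w i‖ = 1)
    (hzw : Tendsto (fun i => star (z i) * w i) l (𝓝 u)) :
    Tendsto (fun i => star (liftAux J₀ hJ₀ (z i)) * liftAux (J i) (hJ i) (w i)) l
      (𝓝 (liftAux J₀ hJ₀ u)) := by
  have hsplit (i : ι) : star (liftAux J₀ hJ₀ (z i)) * liftAux (J i) (hJ i) (w i)
      = liftAux J₀ hJ₀ (star (z i) * w i)
        + star (liftAux J₀ hJ₀ (z i)) * (w i).im • (J i - J₀) := by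
    rw [map_mul, ← star_liftAux hJ₀ hJ₀', ← mul_add, liftAux_apply _ (hJ i),
      liftAux_apply _ hJ₀ (w i), add_assoc, ← smul_add, add_sub_cancel]
  obtain ⟨C, hC⟩ := (isCompact_sphere (0 : ℂ) 1).exists_bound_of_continuousOn
    (continuous_liftAux hJ₀).continuousOn
  have herror : Tendsto (fun i => star (liftAux J₀ hJ₀ (z i)) * (w i).im • (J i - J₀)) l (𝓝 0) := by
    refine squeeze_zero_norm (fun i => ?_)
      (by simpa using (tendsto_iff_norm_sub_tendsto_zero.1 hlim).const_mul C)
    have him : ‖(w i).im • (J i - J₀)‖ ≤ ‖J i - J₀‖ := by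
      rw [norm_smul]
      exact mul_le_of_le_one_left (norm_nonneg _) ((Complex.abs_im_le_norm _).trans (hw i).le)
    rw [star_liftAux hJ₀ hJ₀']
    refine (norm_mul_le _ _).trans (mul_le_mul (hC _ ?_) him (norm_nonneg _) ?_)
    · simp [hz i]
    · exact (norm_nonneg _).trans (hC 1 (by simp))
  simp_rw [hsplit]
  simpa using (((continuous_liftAux hJ₀).tendsto u).comp hzw).add herror

end SkewRoot

section Walk

open Complex (I)

variable (ρ ν : ℝ) (α β : ℂ)

/-- The state vector `Ψ_t(x)`, as an element of the Hilbert space `ℂ²`. -/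
def qstate (t : ℕ) (x : ℤ) : EuclideanSpace ℂ (Fin 2) := WithLp.toLp 2 (qwalk ρ ν α β t x)

lemma norm_qstate_sq (t : ℕ) (x : ℤ) : ‖qstate ρ ν α β t x‖ ^ 2 = qprob ρ ν α β t x := by
  simp [qprob, qstate, EuclideanSpace.norm_sq_eq]

lemma qprob_nonneg (t : ℕ) (x : ℤ) : 0 ≤ qprob ρ ν α β t x := by
  rw [← norm_qstate_sq]
  positivity

lemma qstate_zero (x : ℤ) : qstate ρ ν α β 0 x = if x = 0 then !₂[α, β] else 0 := by
  simp only [qstate, qwalk, apply_ite (WithLp.toLp 2), WithLp.toLp_zero]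

lemma qstate_succ (t : ℕ) (x : ℤ) :
    qstate ρ ν α β (t + 1) x
      = Matrix.toEuclideanCLM (𝕜 := ℂ) (Bm ρ ν) (qstate ρ ν α β t (x + 1))
        + Matrix.toEuclideanCLM (𝕜 := ℂ) (B0 ρ ν) (qstate ρ ν α β t x)
        + Matrix.toEuclideanCLM (𝕜 := ℂ) (Bp ρ ν) (qstate ρ ν α β t (x - 1)) := by
  simp only [qstate, qwalk, Matrix.toEuclideanCLM_toLp, WithLp.toLp_add]

lemma qstate_eq_zero_of_notMem_Icc {t : ℕ} {x : ℤ} (hx : x ∉ Finset.Icc (-t : ℤ) t) :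
    qstate ρ ν α β t x = 0 := by
  induction t generalizing x with
  | zero => simp_all [qstate_zero]
  | succ t ih =>
    simp only [Finset.mem_Icc] at hx ih
    rw [qstate_succ, ih (by lia), ih (by lia), ih (by lia)]
    simp

/-- The symbol `e^{-2iθ} B₋ + B₀ + e^{2iθ} B₊` of the walk at momentum `2θ`. -/
def walkSymbol (θ : ℝ) : Matrix (Fin 2) (Fin 2) ℂ :=
  Complex.exp (-(2 * I * θ)) • Bm ρ ν + B0 ρ ν + Complex.exp (2 * I * θ) • Bp ρ ν

lemma walkSymbol_mem_unitaryGroup {ρ : ℝ} (hρ : ρ ^ 2 ≤ 1) (θ : ℝ) :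
    walkSymbol ρ ν θ ∈ Matrix.unitaryGroup (Fin 2) ℂ := by
  have hrz : (rz ρ : ℂ) ^ 2 = 1 - ρ ^ 2 := by
    exact_mod_cast Real.sq_sqrt (sub_nonneg.2 hρ)
  have haz : az ρ ν * (starRingEnd ℂ) (az ρ ν) = ρ ^ 2 := by
    rw [az, map_mul, Complex.conj_ofReal, mul_mul_mul_comm, Complex.mul_conj', mul_comm I,
      Complex.norm_exp_ofReal_mul_I]
    simp [sq]
  have hexp : Complex.exp (-(2 * I * θ)) * Complex.exp (2 * I * θ) = 1 := by
    rw [← Complex.exp_add, neg_add_cancel, Complex.exp_zero]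
  have hconj : (starRingEnd ℂ) (Complex.exp (2 * I * θ)) = Complex.exp (-(2 * I * θ)) := by
    simp [← Complex.exp_conj, map_ofNat]
  have hconj' : (starRingEnd ℂ) (Complex.exp (-(2 * I * θ))) = Complex.exp (2 * I * θ) := by
    simp [← Complex.exp_conj, map_ofNat]
  rw [Matrix.mem_unitaryGroup_iff, walkSymbol]
  ext i j
  fin_cases i <;> fin_cases j <;>
    simp [Bm, B0, Bp, Matrix.mul_apply, Fin.sum_univ_two, hconj, hconj', hrz] <;>
    grind

/-- The momentum-space evolution operator of the walk. -/
def evolution (θ : ℝ) : EuclideanSpace ℂ (Fin 2) →L[ℂ] EuclideanSpace ℂ (Fin 2) :=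
  Matrix.toEuclideanCLM (𝕜 := ℂ) (walkSymbol ρ ν θ)

lemma continuous_toEuclideanCLM {n : Type*} [Fintype n] [DecidableEq n] :
    Continuous (Matrix.toEuclideanCLM (n := n) (𝕜 := ℂ)) :=
  LinearMap.continuous_of_finiteDimensional
    (Matrix.toEuclideanCLM (n := n) (𝕜 := ℂ)).toAlgEquiv.toLinearMap

lemma continuous_evolution : Continuous (evolution ρ ν) := by
  refine continuous_toEuclideanCLM.comp ?_
  unfold walkSymbol
  fun_prop

lemma evolution_mem_unitary {ρ : ℝ} (hρ : ρ ^ 2 ≤ 1) (θ : ℝ) :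
    evolution ρ ν θ ∈ unitary (EuclideanSpace ℂ (Fin 2) →L[ℂ] EuclideanSpace ℂ (Fin 2)) :=
  Unitary.map_mem _ (walkSymbol_mem_unitaryGroup ν hρ θ)

lemma hasSum_exp_smul_qstate (t : ℕ) (θ : ℝ) :
    HasSum (fun x : ℤ => Complex.exp (2 * I * θ * x) • qstate ρ ν α β t x)
      ((evolution ρ ν θ ^ t) !₂[α, β]) := by
  induction t with
  | zero =>
    have h := hasSum_ite_eq (0 : ℤ) (!₂[α, β] : EuclideanSpace ℂ (Fin 2))
    refine h.congr_fun fun x => ?_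
    split_ifs with hx <;> simp [qstate_zero, hx]
  | succ t ih =>
    have hfwd (x : ℤ) : Complex.exp (-(2 * I * θ)) * Complex.exp (2 * I * θ * (x + 1 : ℤ))
        = Complex.exp (2 * I * θ * x) := by
      rw [← Complex.exp_add]
      push_cast
      ring_nf
    have hbwd (x : ℤ) : Complex.exp (2 * I * θ) * Complex.exp (2 * I * θ * (x - 1 : ℤ))
        = Complex.exp (2 * I * θ * x) := by
      rw [← Complex.exp_add]
      push_cast
      ring_nf
    have hm := ((Equiv.addRight (1 : ℤ)).hasSum_iff.2 ih).mapL
      (Matrix.toEuclideanCLM (𝕜 := ℂ) (Complex.exp (-(2 * I * θ)) • Bm ρ ν))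
    have h0 := ih.mapL (Matrix.toEuclideanCLM (𝕜 := ℂ) (B0 ρ ν))
    have hp := ((Equiv.subRight (1 : ℤ)).hasSum_iff.2 ih).mapL
      (Matrix.toEuclideanCLM (𝕜 := ℂ) (Complex.exp (2 * I * θ) • Bp ρ ν))
    convert (hm.add h0).add hp using 1
    · ext1 x
      simp only [qstate_succ, smul_add, Function.comp_apply, Equiv.coe_addRight,
        Equiv.subRight_apply, map_smul, smul_apply, smul_comm (Complex.exp (2 * I * θ * _)),
        smul_smul, hfwd, hbwd]
    · simp only [pow_succ', evolution, walkSymbol, map_add, mul_apply_eq_comp, add_apply]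

lemma evolution_pow_apply (t : ℕ) (θ : ℝ) :
    (evolution ρ ν θ ^ t) !₂[α, β]
      = ∑ x ∈ Finset.Icc (-t : ℤ) t, Complex.exp (2 * I * θ * x) • qstate ρ ν α β t x :=
  (hasSum_exp_smul_qstate ρ ν α β t θ).unique <| hasSum_sum_of_ne_finset_zero fun x hx => by
    rw [qstate_eq_zero_of_notMem_Icc _ _ _ _ hx, smul_zero]

lemma integral_inner_evolution_pow (t : ℕ) (δ : ℝ) :
    ∫ θ in (0 : ℝ)..π, inner ℂ ((evolution ρ ν θ ^ t) !₂[α, β])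
        ((evolution ρ ν (θ + δ) ^ t) !₂[α, β])
      = π * ∑ x ∈ Finset.Icc (-t : ℤ) t, qprob ρ ν α β t x * Complex.exp (2 * I * δ * x) := by
  have hshift (θ : ℝ) (x : ℤ) : Complex.exp (2 * I * (θ + δ : ℝ) * x) • qstate ρ ν α β t x
      = Complex.exp (2 * I * θ * x) • Complex.exp (2 * I * δ * x) • qstate ρ ν α β t x := by
    rw [smul_smul, ← Complex.exp_add]
    push_cast
    ring_nf
  simp_rw [evolution_pow_apply, hshift, integral_inner_sum_exp_smul, inner_smul_right,
    inner_self_eq_norm_sq_to_K, ← norm_qstate_sq]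
  simp [mul_comm]

/-- The law of `X_t / t` (for `t = 0`, the Dirac mass at `0`). -/
def rescaledLaw (t : ℕ) : Measure ℝ :=
  ∑ x ∈ Finset.Icc (-t : ℤ) t, ENNReal.ofReal (qprob ρ ν α β t x) • Measure.dirac (x / t : ℝ)

lemma integral_rescaledLaw {E : Type*} [NormedAddCommGroup E] [NormedSpace ℝ E] [CompleteSpace E]
    (f : ℝ → E) (t : ℕ) :
    ∫ y, f y ∂rescaledLaw ρ ν α β t
      = ∑ x ∈ Finset.Icc (-t : ℤ) t, qprob ρ ν α β t x • f (x / t) := by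
  rw [rescaledLaw, integral_finsetSum_measure fun x _ =>
    (integrable_dirac (by finiteness)).smul_measure ENNReal.ofReal_ne_top]
  simp only [integral_smul_measure, integral_dirac, ENNReal.toReal_ofReal (qprob_nonneg ..)]

lemma charFun_rescaledLaw (t : ℕ) (ξ : ℝ) :
    charFun (rescaledLaw ρ ν α β t) ξ
      = (π : ℂ)⁻¹ * ∫ θ in (0 : ℝ)..π, inner ℂ ((evolution ρ ν θ ^ t) !₂[α, β])
          ((evolution ρ ν (θ + ξ / 2 / t) ^ t) !₂[α, β]) := by
  rw [integral_inner_evolution_pow, inv_mul_cancel_left₀ (by simp [pi_ne_zero]), charFun_apply_real,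
    integral_rescaledLaw]
  refine Finset.sum_congr rfl fun x _ => ?_
  rw [Complex.real_smul]
  push_cast
  ring_nf

lemma rescaledLaw_real_Iic {t : ℕ} (ht : 0 < t) (x : ℝ) :
    (rescaledLaw ρ ν α β t).real (Set.Iic x)
      = ∑' y : ℤ, if (y : ℝ) ≤ x * t then qprob ρ ν α β t y else 0 := by
  rw [← integral_indicator_one measurableSet_Iic, integral_rescaledLaw, tsum_eq_sum fun y hy => by
    rw [← norm_qstate_sq, qstate_eq_zero_of_notMem_Icc _ _ _ _ hy]; simp]
  have ht' : (0 : ℝ) < t := Nat.cast_pos.2 ht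
  simp only [Set.indicator_apply, Set.mem_Iic, div_le_iff₀ ht', Pi.one_apply,
    smul_eq_mul, mul_ite, mul_one, mul_zero]

variable {ρ α β}

lemma norm_initialState (hαβ : ‖α‖ ^ 2 + ‖β‖ ^ 2 = 1) :
    ‖(!₂[α, β] : EuclideanSpace ℂ (Fin 2))‖ = 1 := by
  simp [EuclideanSpace.norm_eq, hαβ]

lemma norm_evolution_pow_apply (hρ : ρ ^ 2 ≤ 1) (t : ℕ) (θ : ℝ) (v : EuclideanSpace ℂ (Fin 2)) :
    ‖(evolution ρ ν θ ^ t) v‖ = ‖v‖ :=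
  ContinuousLinearMap.norm_map_of_mem_unitary (pow_mem (evolution_mem_unitary ν hρ θ) t) v

lemma isProbabilityMeasure_rescaledLaw (hρ : ρ ^ 2 ≤ 1) (hαβ : ‖α‖ ^ 2 + ‖β‖ ^ 2 = 1) (t : ℕ) :
    IsProbabilityMeasure (rescaledLaw ρ ν α β t) := by
  have h : charFun (rescaledLaw ρ ν α β t) 0 = 1 := by
    simp only [charFun_rescaledLaw, zero_div, add_zero, inner_self_eq_norm_sq_to_K,
      norm_evolution_pow_apply ν hρ, norm_initialState hαβ]
    simp [pi_ne_zero]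
  rw [charFun_zero] at h
  exact isProbabilityMeasure_iff_real.2 (by exact_mod_cast h)

end Walk

section Dispersion

open Complex (I)

/-- The normalising factor `√(1 + cos²θ)` of the spectral decomposition at the exceptional
parameters. -/
def cosHypot (θ : ℝ) : ℝ := √(1 + cos θ ^ 2)

/-- The dynamical phase `e^{iω(θ)}`, equal to an eigenvalue of the symbol up to the constant factor
`-i(-1)ⁿ`. -/
def dynamicalPhase (θ : ℝ) : ℂ :=
  (cos θ ^ 2 : ℝ) + (sin θ * cosHypot θ : ℝ) * I

/-- The group velocity `ω'(θ) / 2` of the dynamical phase `e^{iω(θ)}`. -/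
def groupVelocity (θ : ℝ) : ℝ := cos θ / cosHypot θ

lemma cosHypot_sq (θ : ℝ) : cosHypot θ ^ 2 = 1 + cos θ ^ 2 := Real.sq_sqrt (by positivity)

lemma cosHypot_pos (θ : ℝ) : 0 < cosHypot θ := Real.sqrt_pos.2 (by positivity)

lemma cosHypot_pi_sub (θ : ℝ) : cosHypot (π - θ) = cosHypot θ := by
  simp [cosHypot, cos_pi_sub]

lemma groupVelocity_pi_sub (θ : ℝ) : groupVelocity (π - θ) = -groupVelocity θ := by
  rw [groupVelocity, groupVelocity, cosHypot_pi_sub, cos_pi_sub, neg_div]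

lemma dynamicalPhase_re (θ : ℝ) : (dynamicalPhase θ).re = cos θ ^ 2 := by
  rw [dynamicalPhase, Complex.add_re, Complex.re_ofReal_mul, Complex.ofReal_re, Complex.I_re,
    mul_zero, add_zero]

lemma dynamicalPhase_im (θ : ℝ) : (dynamicalPhase θ).im = sin θ * cosHypot θ := by
  rw [dynamicalPhase, Complex.add_im, Complex.im_ofReal_mul, Complex.ofReal_im, Complex.I_im,
    mul_one, zero_add]

lemma norm_dynamicalPhase (θ : ℝ) : ‖dynamicalPhase θ‖ = 1 := by
  have h : (cos θ ^ 2) ^ 2 + (sin θ * cosHypot θ) ^ 2 = 1 := by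
    rw [mul_pow, cosHypot_sq, sin_sq]
    ring
  rw [dynamicalPhase, Complex.norm_add_mul_I, h, sqrt_one]

lemma hasDerivAt_cosHypot (θ : ℝ) :
    HasDerivAt cosHypot (-(cos θ * sin θ) / cosHypot θ) θ := by
  have hne : 1 + cos θ ^ 2 ≠ 0 := by positivity
  refine ((((hasDerivAt_cos θ).pow 2).const_add 1).sqrt hne).congr_deriv ?_
  have hq := (cosHypot_pos θ).ne'
  change _ / (2 * cosHypot θ) = _
  field_simp
  norm_num
  ring

lemma hasDerivAt_dynamicalPhase (θ : ℝ) :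
    HasDerivAt dynamicalPhase (2 * I * groupVelocity θ * dynamicalPhase θ) θ := by
  refine (((hasDerivAt_cos θ).pow 2).ofReal_comp.add
    (((hasDerivAt_sin θ).mul (hasDerivAt_cosHypot θ)).ofReal_comp.mul_const I)).congr_deriv ?_
  have hq : (cosHypot θ : ℂ) ^ 2 = 1 + (cos θ : ℂ) ^ 2 := by exact_mod_cast cosHypot_sq θ
  have hpyth : (sin θ : ℂ) ^ 2 = 1 - (cos θ : ℂ) ^ 2 := by exact_mod_cast sin_sq θ
  have hq0 : (cosHypot θ : ℂ) ≠ 0 := by exact_mod_cast (cosHypot_pos θ).ne'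
  have hI := Complex.I_sq
  rw [groupVelocity, dynamicalPhase]
  push_cast at hq hpyth hq0 ⊢
  generalize I = i at hI ⊢
  generalize (cosHypot θ : ℂ) = q at *
  generalize Complex.cos θ = c at *
  generalize Complex.sin θ = s at *
  field_simp
  grind

lemma hasDerivAt_groupVelocity (θ : ℝ) :
    HasDerivAt groupVelocity (-sin θ / cosHypot θ ^ 3) θ := by
  have hq := (cosHypot_pos θ).ne'
  refine ((hasDerivAt_cos θ).div (hasDerivAt_cosHypot θ) hq).congr_deriv ?_
  field_simp
  linear_combination (-sin θ) * cosHypot_sq θ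

lemma continuous_cosHypot : Continuous cosHypot := by
  unfold cosHypot
  fun_prop

lemma continuous_groupVelocity : Continuous groupVelocity :=
  continuous_cos.div continuous_cosHypot fun θ => (cosHypot_pos θ).ne'

lemma tendsto_star_dynamicalPhase_pow_mul_pow (θ η : ℝ) :
    Tendsto (fun t : ℕ => star (dynamicalPhase θ ^ t) * dynamicalPhase (θ + η / t) ^ t) atTop
      (𝓝 (Complex.exp (2 * η * groupVelocity θ * I))) := by
  have hone : star (dynamicalPhase θ) * dynamicalPhase θ = 1 := by
    simp [Complex.conj_mul', norm_dynamicalPhase]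
  have hderiv : HasDerivAt (fun φ => star (dynamicalPhase θ) * dynamicalPhase φ)
      (2 * I * groupVelocity θ) θ :=
    ((hasDerivAt_dynamicalPhase θ).const_mul _).congr_deriv (by
      linear_combination (2 * I * groupVelocity θ) * hone)
  have h := tendsto_pow_comp_add_div_of_hasDerivAt hderiv hone η
  simp_rw [mul_pow, ← star_pow] at h
  convert h using 3
  ring

end Dispersion

section Spectral

open Complex (I)

lemma neg_one_zpow_sq {R : Type*} [DivisionRing R] (n : ℤ) : ((-1 : R) ^ n) ^ 2 = 1 := by
  rcases n.even_or_odd with h | h <;> simp [h.neg_one_zpow]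

/-- The matrix `J(θ)`, skew-adjoint with `J(θ)² = -1`, which plays the role of the imaginary unit in
the functional calculus of the symbol. -/
def complexStructureMatrix (n : ℤ) (θ : ℝ) : Matrix (Fin 2) (Fin 2) ℂ :=
  (cosHypot θ : ℂ)⁻¹ • !![I * cos θ, -((-1) ^ n * Complex.exp (I * θ));
    (-1) ^ n * Complex.exp (-(I * θ)), -(I * cos θ)]

lemma complexStructureMatrix_mul_self (n : ℤ) (θ : ℝ) :
    complexStructureMatrix n θ * complexStructureMatrix n θ = -1 := by
  have hq : (cosHypot θ : ℂ) ^ 2 = 1 + Complex.cos θ ^ 2 := by exact_mod_cast cosHypot_sq θ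
  have hq0 : (cosHypot θ : ℂ) ≠ 0 := by exact_mod_cast (cosHypot_pos θ).ne'
  have hexp : Complex.exp (I * θ) * Complex.exp (-(I * θ)) = 1 := by
    rw [← Complex.exp_add, add_neg_cancel, Complex.exp_zero]
  have hs := neg_one_zpow_sq (R := ℂ) n
  have hI := Complex.I_sq
  rw [complexStructureMatrix]
  ext i j
  fin_cases i <;> fin_cases j <;>
    simp [Matrix.mul_apply, Fin.sum_univ_two] <;>
    field_simp <;> grind

lemma star_complexStructureMatrix (n : ℤ) (θ : ℝ) :
    star (complexStructureMatrix n θ) = -complexStructureMatrix n θ := by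
  ext i j
  fin_cases i <;> fin_cases j <;>
    simp [complexStructureMatrix, ← Complex.exp_conj, ← Complex.cos_conj]

variable {ρ ν : ℝ} {n : ℤ}

lemma sq_eq_half (hρ : ρ = 1 / √2) : ρ ^ 2 = 1 / 2 := by simp [hρ]

lemma rz_eq_self (hρ : ρ = 1 / √2) : rz ρ = ρ := by
  have h : 1 - ρ ^ 2 = ρ ^ 2 := by linarith [sq_eq_half hρ]
  rw [rz, h, sqrt_sq (by rw [hρ]; positivity)]

lemma exp_I_mul_eq (hν : ν = π / 2 + n * π) : Complex.exp (I * ν) = I * (-1) ^ n := by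
  have h : I * ν = π / 2 * I + n * (π * I) := by
    rw [hν]
    push_cast
    ring
  rw [h, Complex.exp_add, Complex.exp_int_mul, Complex.exp_pi_mul_I, Complex.exp_pi_div_two_mul_I]

lemma walkSymbol_eq (hρ : ρ = 1 / √2) (hν : ν = π / 2 + n * π) (θ : ℝ) :
    walkSymbol ρ ν θ = (-(I * (-1) ^ n)) •
      ((cos θ ^ 2 : ℝ) • 1 + (sin θ * cosHypot θ) • complexStructureMatrix n θ) := by
  have hq0 : (cosHypot θ : ℂ) ≠ 0 := by exact_mod_cast (cosHypot_pos θ).ne'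
  have hsq : (ρ : ℂ) ^ 2 = 1 / 2 := by
    rw [← Complex.ofReal_pow, sq_eq_half hρ]
    norm_num
  have haz : az ρ ν = ρ * (I * (-1) ^ n) := by rw [az, exp_I_mul_eq hν]
  have hs := neg_one_zpow_sq (R := ℂ) n
  have hI := Complex.I_sq
  have hpyth := Complex.sin_sq_add_cos_sq θ
  have hexp : Complex.exp (I * θ) = Complex.cos θ + Complex.sin θ * I := by
    rw [mul_comm, Complex.exp_mul_I]
  have hexp_two : Complex.exp (2 * I * θ) = (Complex.cos θ + Complex.sin θ * I) ^ 2 := by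
    rw [← hexp, ← Complex.exp_nat_mul, mul_assoc, Nat.cast_ofNat]
  have hexp_neg : Complex.exp (-(I * θ)) = Complex.cos θ - Complex.sin θ * I := by
    rw [Complex.cos_sub_sin_I, neg_mul, mul_comm I]
  have hexp_neg_two : Complex.exp (-(2 * I * θ)) = (Complex.cos θ - Complex.sin θ * I) ^ 2 := by
    rw [← hexp_neg, ← Complex.exp_nat_mul, mul_neg, mul_assoc, Nat.cast_ofNat]
  rw [walkSymbol, complexStructureMatrix, Bm, B0, Bp, rz_eq_self hρ, haz]
  ext i j
  fin_cases i <;> fin_cases j <;>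
    simp [hexp, hexp_two, hexp_neg, hexp_neg_two] <;> field_simp <;> grind

end Spectral

section Asymptotics

open Complex (I liftAux liftAux_apply)

/-- The operator on `ℂ²` with matrix `complexStructureMatrix n θ`. -/
def complexStructure (n : ℤ) (θ : ℝ) : EuclideanSpace ℂ (Fin 2) →L[ℂ] EuclideanSpace ℂ (Fin 2) :=
  Matrix.toEuclideanCLM (𝕜 := ℂ) (complexStructureMatrix n θ)

lemma complexStructure_mul_self (n : ℤ) (θ : ℝ) :
    complexStructure n θ * complexStructure n θ = -1 := by
  rw [complexStructure, ← map_mul, complexStructureMatrix_mul_self, map_neg, map_one]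

lemma star_complexStructure (n : ℤ) (θ : ℝ) :
    star (complexStructure n θ) = -complexStructure n θ := by
  rw [complexStructure, ← map_star, star_complexStructureMatrix, map_neg]

lemma continuous_complexStructure (n : ℤ) : Continuous (complexStructure n) := by
  refine continuous_toEuclideanCLM.comp ?_
  have hq : ∀ θ : ℝ, (cosHypot θ : ℂ) ≠ 0 := fun θ => by exact_mod_cast (cosHypot_pos θ).ne'
  have hcont := continuous_cosHypot
  unfold complexStructureMatrix
  fun_prop (disch := assumption)

variable {ρ ν : ℝ} {n : ℤ}

lemma evolution_eq (hρ : ρ = 1 / √2) (hν : ν = π / 2 + n * π) (θ : ℝ) :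
    evolution ρ ν θ = (-(I * (-1) ^ n)) •
      liftAux (complexStructure n θ) (complexStructure_mul_self n θ) (dynamicalPhase θ) := by
  rw [evolution, walkSymbol_eq hρ hν, liftAux_apply, dynamicalPhase_re,
    dynamicalPhase_im, complexStructure, Algebra.algebraMap_eq_smul_one, map_smul, map_add,
    ← Complex.coe_smul, ← Complex.coe_smul, map_smul, map_smul, map_one]
  rfl

lemma star_evolution_pow_mul_evolution_pow (hρ : ρ = 1 / √2) (hν : ν = π / 2 + n * π)
    (t : ℕ) (θ φ : ℝ) :
    star (evolution ρ ν θ ^ t) * evolution ρ ν φ ^ t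
      = star (liftAux _ (complexStructure_mul_self n θ) (dynamicalPhase θ ^ t))
        * liftAux _ (complexStructure_mul_self n φ) (dynamicalPhase φ ^ t) := by
  have hone : star (-(I * (-1) ^ n)) * -(I * (-1) ^ n) = 1 := by
    have hs := neg_one_zpow_sq (R := ℂ) n
    simp only [star_neg, star_mul, star_zpow₀, star_one, Complex.star_def, Complex.conj_I]
    linear_combination (-I ^ 2) * hs - Complex.I_sq
  rw [evolution_eq hρ hν, evolution_eq hρ hν, smul_pow, smul_pow, star_smul, smul_mul_smul_comm,
    star_pow, ← mul_pow, hone, one_pow, one_smul, map_pow, map_pow]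

lemma tendsto_inner_evolution_pow (hρ : ρ = 1 / √2) (hν : ν = π / 2 + n * π) (θ η : ℝ)
    (v : EuclideanSpace ℂ (Fin 2)) :
    Tendsto (fun t : ℕ => inner ℂ ((evolution ρ ν θ ^ t) v) ((evolution ρ ν (θ + η / t) ^ t) v))
      atTop (𝓝 (inner ℂ v (liftAux _ (complexStructure_mul_self n θ)
        (Complex.exp (2 * η * groupVelocity θ * I)) v))) := by
  have hargs : Tendsto (fun t : ℕ => θ + η / t) atTop (𝓝 θ) := by
    simpa using (tendsto_const_div_atTop_nhds_zero_nat η).const_add θ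
  have h := tendsto_star_liftAux_mul_liftAux (complexStructure_mul_self n θ)
    (star_complexStructure n θ) (fun t : ℕ => complexStructure_mul_self n (θ + η / t))
    (((continuous_complexStructure n).tendsto θ).comp hargs)
    (fun t => by simp [norm_dynamicalPhase]) (fun t => by simp [norm_dynamicalPhase])
    (tendsto_star_dynamicalPhase_pow_mul_pow θ η)
  simp_rw [← star_evolution_pow_mul_evolution_pow hρ hν] at h
  have hv := (tendsto_const_nhds (x := v)).inner (𝕜 := ℂ)
    (((ContinuousLinearMap.apply ℂ _ v).continuous.tendsto _).comp h)
  refine hv.congr fun t => ?_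
  rw [Function.comp_apply, ContinuousLinearMap.apply_apply, mul_apply_eq_comp,
    ContinuousLinearMap.star_eq_adjoint, ContinuousLinearMap.adjoint_inner_right]

/-- The slope of `Theta n α β`. -/
def drift (n : ℤ) (α β : ℂ) : ℝ :=
  ‖α‖ ^ 2 - ‖β‖ ^ 2 + (-1) ^ n * 2 * (α * (starRingEnd ℂ) β).im

lemma inner_complexStructure (n : ℤ) (α β : ℂ) (θ : ℝ) :
    inner ℂ !₂[α, β] (complexStructure n θ !₂[α, β])
      = (groupVelocity θ * drift n α β
          - 2 * (-1) ^ n * sin θ / cosHypot θ * (α * (starRingEnd ℂ) β).re : ℝ) * I := by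
  have hexp : Complex.exp (-(I * θ)) = Complex.cos θ - Complex.sin θ * I := by
    rw [Complex.cos_sub_sin_I, neg_mul, mul_comm I]
  have hq : (cosHypot θ : ℂ) ≠ 0 := by exact_mod_cast (cosHypot_pos θ).ne'
  rw [complexStructure, complexStructureMatrix, groupVelocity, drift]
  push_cast
  rw [← Complex.mul_conj' α, ← Complex.mul_conj' β, Complex.re_eq_add_conj, Complex.im_eq_sub_conj]
  simp [PiLp.inner_apply, Fin.sum_univ_two, mul_comm I, Complex.exp_mul_I]
  field_simp
  grind [Complex.I_sq]

lemma inner_liftAux_complexStructure (n : ℤ) {α β : ℂ} (hαβ : ‖α‖ ^ 2 + ‖β‖ ^ 2 = 1) (θ x : ℝ) :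
    inner ℂ !₂[α, β] (liftAux _ (complexStructure_mul_self n θ) (Complex.exp (x * I)) !₂[α, β])
      = cos x + sin x * (groupVelocity θ * drift n α β
          - 2 * (-1) ^ n * sin θ / cosHypot θ * (α * (starRingEnd ℂ) β).re : ℝ) * I := by
  have hself : inner ℂ !₂[α, β] !₂[α, β] = 1 := by
    rw [inner_self_eq_norm_sq_to_K, norm_initialState hαβ]
    simp
  rw [liftAux_apply, Complex.exp_ofReal_mul_I_re, Complex.exp_ofReal_mul_I_im,
    Algebra.algebraMap_eq_smul_one, add_apply, smul_apply, smul_apply, one_apply_eq_self,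
    inner_add_right, inner_smul_right_eq_smul, inner_smul_right_eq_smul, hself,
    inner_complexStructure]
  simp [mul_assoc]

lemma integral_inner_liftAux_complexStructure (n : ℤ) {α β : ℂ} (hαβ : ‖α‖ ^ 2 + ‖β‖ ^ 2 = 1)
    (ξ : ℝ) :
    ∫ θ in (0 : ℝ)..π, inner ℂ !₂[α, β] (liftAux _ (complexStructure_mul_self n θ)
        (Complex.exp (ξ * groupVelocity θ * I)) !₂[α, β])
      = ∫ θ in (0 : ℝ)..π,
        (1 + drift n α β * groupVelocity θ : ℝ) • Complex.exp (ξ * groupVelocity θ * I) := by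
  have hv := continuous_groupVelocity
  have hq := continuous_cosHypot
  have hq0 (θ : ℝ) : cosHypot θ ≠ 0 := (cosHypot_pos θ).ne'
  simp_rw [← Complex.ofReal_mul, inner_liftAux_complexStructure n hαβ, Complex.exp_mul_I,
    Complex.real_smul]
  rw [← sub_eq_zero, ← intervalIntegral.integral_sub]
  · refine intervalIntegral_eq_zero_of_comp_sub_eq_neg fun θ => ?_
    rw [zero_add, groupVelocity_pi_sub, cosHypot_pi_sub, sin_pi_sub]
    push_cast
    simp only [mul_neg, Complex.cos_neg, Complex.sin_neg]
    ring
  all_goals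
    apply Continuous.intervalIntegrable
    fun_prop (disch := assumption)

lemma tendsto_charFun_rescaledLaw (hρ : ρ = 1 / √2) (hν : ν = π / 2 + n * π) {α β : ℂ}
    (hαβ : ‖α‖ ^ 2 + ‖β‖ ^ 2 = 1) (ξ : ℝ) :
    Tendsto (fun t => charFun (rescaledLaw ρ ν α β t) ξ) atTop
      (𝓝 ((π : ℂ)⁻¹ * ∫ θ in (0 : ℝ)..π,
        (1 + drift n α β * groupVelocity θ : ℝ) • Complex.exp (ξ * groupVelocity θ * I))) := by
  have hρ' : ρ ^ 2 ≤ 1 := by rw [sq_eq_half hρ]; norm_num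
  have hU := continuous_evolution ρ ν
  simp_rw [charFun_rescaledLaw, ← integral_inner_liftAux_complexStructure n hαβ]
  refine (intervalIntegral.tendsto_integral_filter_of_dominated_convergence (fun _ => 1) ?_ ?_
    intervalIntegrable_const ?_).const_mul _
  · refine Eventually.of_forall fun t => Continuous.aestronglyMeasurable ?_
    fun_prop
  · refine Eventually.of_forall fun t => Eventually.of_forall fun θ _ => ?_
    refine (norm_inner_le_norm _ _).trans_eq ?_
    simp only [norm_evolution_pow_apply ν hρ', norm_initialState hαβ, mul_one]
  · refine Eventually.of_forall fun θ _ => ?_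
    have h := tendsto_inner_evolution_pow hρ hν θ (ξ / 2) !₂[α, β]
    convert h using 3
    push_cast
    congr 5
    ring

end Asymptotics

section LimitLaw

lemma groupVelocity_sq_le (θ : ℝ) : groupVelocity θ ^ 2 ≤ 1 / 2 := by
  rw [groupVelocity, div_pow, cosHypot_sq, div_le_div_iff₀ (by positivity) (by norm_num)]
  linarith [cos_sq_le_one θ]

lemma strictAntiOn_groupVelocity : StrictAntiOn groupVelocity (Set.Icc 0 π) := by
  refine strictAntiOn_of_deriv_neg (convex_Icc _ _) continuous_groupVelocity.continuousOn
    fun θ hθ => ?_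
  rw [interior_Icc] at hθ
  rw [(hasDerivAt_groupVelocity θ).deriv, neg_div, neg_lt_zero]
  exact div_pos (sin_pos_of_mem_Ioo hθ) (pow_pos (cosHypot_pos θ) 3)

lemma groupVelocity_zero : groupVelocity 0 = 1 / √2 := by
  rw [groupVelocity, cosHypot, cos_zero]
  norm_num

lemma groupVelocity_pi : groupVelocity π = -(1 / √2) := by
  rw [← groupVelocity_zero, ← groupVelocity_pi_sub, sub_zero]

lemma image_groupVelocity_Ioo :
    groupVelocity '' Set.Ioo 0 π = Set.Ioo (-(1 / √2)) (1 / √2) := by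
  rw [← groupVelocity_pi, ← groupVelocity_zero]
  refine Set.Subset.antisymm ?_
    (intermediate_value_Ioo' pi_pos.le continuous_groupVelocity.continuousOn)
  rintro _ ⟨θ, hθ, rfl⟩
  have hmem := Set.Ioo_subset_Icc_self hθ
  exact ⟨strictAntiOn_groupVelocity hmem (Set.right_mem_Icc.2 pi_pos.le) hθ.2,
    strictAntiOn_groupVelocity (Set.left_mem_Icc.2 pi_pos.le) hmem hθ.1⟩

lemma one_sub_groupVelocity_sq (θ : ℝ) : 1 - groupVelocity θ ^ 2 = 1 / cosHypot θ ^ 2 := by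
  have hq := (cosHypot_pos θ).ne'
  rw [groupVelocity, div_pow]
  field_simp
  linear_combination cosHypot_sq θ

lemma one_sub_two_mul_groupVelocity_sq (θ : ℝ) :
    1 - 2 * groupVelocity θ ^ 2 = (sin θ / cosHypot θ) ^ 2 := by
  have hq := (cosHypot_pos θ).ne'
  rw [groupVelocity, div_pow, div_pow, sin_sq]
  field_simp
  linear_combination cosHypot_sq θ

variable (n : ℤ) (α β : ℂ)

lemma abs_deriv_mul_densStd_groupVelocity {θ : ℝ} (hθ : θ ∈ Set.Ioo 0 π) :
    |-sin θ / cosHypot θ ^ 3| * densStd n α β (groupVelocity θ)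
      = π⁻¹ * (1 + drift n α β * groupVelocity θ) := by
  have hsin := sin_pos_of_mem_Ioo hθ
  have hq := cosHypot_pos θ
  rw [densStd, if_pos (image_groupVelocity_Ioo ▸ Set.mem_image_of_mem _ hθ),
    one_sub_groupVelocity_sq, one_sub_two_mul_groupVelocity_sq, sqrt_sq (by positivity), neg_div,
    abs_neg, abs_of_pos (by positivity), Theta, drift]
  field_simp

lemma integral_densStd_smul {E : Type*} [NormedAddCommGroup E] [NormedSpace ℝ E] (f : ℝ → E) :
    ∫ y, densStd n α β y • f y
      = π⁻¹ • ∫ θ in (0 : ℝ)..π,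
        (1 + drift n α β * groupVelocity θ) • f (groupVelocity θ) := by
  have hsupport : ∀ y ∉ Set.Ioo (-(1 / √2)) (1 / √2), densStd n α β y • f y = 0 := fun y hy => by
    rw [densStd, if_neg hy, zero_smul]
  rw [← setIntegral_eq_integral_of_forall_compl_eq_zero hsupport, ← image_groupVelocity_Ioo,
    integral_image_eq_integral_abs_deriv_smul measurableSet_Ioo
      (fun θ _ => (hasDerivAt_groupVelocity θ).hasDerivWithinAt)
      (strictAntiOn_groupVelocity.injOn.mono Set.Ioo_subset_Icc_self),
    intervalIntegral.integral_of_le pi_pos.le, integral_Ioc_eq_integral_Ioo, ← integral_smul]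
  refine setIntegral_congr_fun measurableSet_Ioo fun θ hθ => ?_
  simp only [smul_smul, abs_deriv_mul_densStd_groupVelocity n α β hθ]

lemma integral_one_add_mul_groupVelocity (c : ℝ) :
    ∫ θ in (0 : ℝ)..π, (1 + c * groupVelocity θ) = π := by
  have hodd : ∫ θ in (0 : ℝ)..π, groupVelocity θ = 0 :=
    intervalIntegral_eq_zero_of_comp_sub_eq_neg fun θ => by rw [zero_add, groupVelocity_pi_sub]
  have hv := continuous_groupVelocity.intervalIntegrable (μ := volume) 0 π
  rw [intervalIntegral.integral_add intervalIntegrable_const (hv.const_mul c),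
    intervalIntegral.integral_const_mul, hodd]
  simp

lemma measurable_densStd : Measurable (densStd n α β) := by
  refine Measurable.ite measurableSet_Ioo ?_ measurable_const
  unfold Theta
  fun_prop

/-- The absolutely continuous measure on `ℝ` with density `densStd n α β`. -/
def limitLaw : Measure ℝ := volume.withDensity fun y => ENNReal.ofReal (densStd n α β y)

instance : NullSingletonClass (limitLaw n α β) :=
  ⟨fun _ => withDensity_absolutelyContinuous _ _ (measure_singleton _)⟩

variable {α β}

lemma drift_sq_le (hαβ : ‖α‖ ^ 2 + ‖β‖ ^ 2 = 1) : drift n α β ^ 2 ≤ 2 := by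
  have him : (α * (starRingEnd ℂ) β).im ^ 2 ≤ ‖α‖ ^ 2 * ‖β‖ ^ 2 := by
    rw [← mul_pow, ← RCLike.norm_conj β, ← norm_mul]
    exact sq_le_sq' (abs_le.1 (Complex.abs_im_le_norm _)).1 (Complex.im_le_norm _)
  have hsign := neg_one_zpow_sq (R := ℝ) n
  calc drift n α β ^ 2
      ≤ 2 * ((‖α‖ ^ 2 - ‖β‖ ^ 2) ^ 2 + ((-1) ^ n * 2 * (α * (starRingEnd ℂ) β).im) ^ 2) :=
        add_sq_le
    _ = 2 * ((‖α‖ ^ 2 - ‖β‖ ^ 2) ^ 2 + 4 * (α * (starRingEnd ℂ) β).im ^ 2) := by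
        rw [mul_pow, mul_pow, hsign]
        ring
    _ ≤ 2 * (‖α‖ ^ 2 + ‖β‖ ^ 2) ^ 2 := by linarith
    _ = 2 := by rw [hαβ]; norm_num

lemma densStd_nonneg (hαβ : ‖α‖ ^ 2 + ‖β‖ ^ 2 = 1) (y : ℝ) : 0 ≤ densStd n α β y := by
  rw [densStd]
  split_ifs with hy
  swap
  · rfl
  rw [← image_groupVelocity_Ioo] at hy
  obtain ⟨θ, -, rfl⟩ := hy
  have hle := groupVelocity_sq_le θ
  have hsq : (drift n α β * groupVelocity θ) ^ 2 ≤ 1 := by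
    rw [mul_pow]
    nlinarith [drift_sq_le n hαβ, sq_nonneg (drift n α β), sq_nonneg (groupVelocity θ)]
  have hTheta : 0 ≤ Theta n α β (groupVelocity θ) :=
    neg_le_iff_add_nonneg'.1 (abs_le.1 (sq_le_one_iff_abs_le_one _ |>.1 hsq)).1
  have hone : 0 ≤ 1 - groupVelocity θ ^ 2 := by linarith
  positivity

lemma integral_limitLaw {E : Type*} [NormedAddCommGroup E] [NormedSpace ℝ E]
    (hαβ : ‖α‖ ^ 2 + ‖β‖ ^ 2 = 1) (f : ℝ → E) :
    ∫ y, f y ∂limitLaw n α β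
      = π⁻¹ • ∫ θ in (0 : ℝ)..π,
        (1 + drift n α β * groupVelocity θ) • f (groupVelocity θ) := by
  rw [limitLaw, integral_withDensity_eq_integral_toReal_smul
    (measurable_densStd n α β).ennreal_ofReal (by simp)]
  simp_rw [ENNReal.toReal_ofReal (densStd_nonneg n hαβ _), integral_densStd_smul]

lemma isProbabilityMeasure_limitLaw (hαβ : ‖α‖ ^ 2 + ‖β‖ ^ 2 = 1) :
    IsProbabilityMeasure (limitLaw n α β) := by
  have h := integral_limitLaw n hαβ fun _ => (1 : ℝ)
  simp_rw [smul_eq_mul, mul_one, integral_one_add_mul_groupVelocity, inv_mul_cancel₀ pi_ne_zero,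
    integral_const, smul_eq_mul, mul_one] at h
  exact isProbabilityMeasure_iff_real.2 h

lemma charFun_limitLaw (hαβ : ‖α‖ ^ 2 + ‖β‖ ^ 2 = 1) (ξ : ℝ) :
    charFun (limitLaw n α β) ξ
      = (π : ℂ)⁻¹ * ∫ θ in (0 : ℝ)..π, (1 + drift n α β * groupVelocity θ : ℝ) •
        Complex.exp (ξ * groupVelocity θ * Complex.I) := by
  rw [charFun_apply_real, integral_limitLaw n hαβ, Complex.real_smul, Complex.ofReal_inv]

lemma limitLaw_real_Iic (hαβ : ‖α‖ ^ 2 + ‖β‖ ^ 2 = 1) (x : ℝ) :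
    (limitLaw n α β).real (Set.Iic x) = ∫ y in Set.Iic x, densStd n α β y := by
  rw [integral_eq_lintegral_of_nonneg_ae (ae_of_all _ (densStd_nonneg n hαβ))
    (measurable_densStd n α β).aestronglyMeasurable, limitLaw, Measure.real,
    withDensity_apply _ measurableSet_Iic]

end LimitLaw

/-- at `ρ = 1/√2`, `ν = π/2 + nπ`, the walk converges in distribution to
the standard coined-walk density. -/
theorem stmt1 (ρ ν : ℝ) (n : ℤ) (hρ : ρ = 1 / Real.sqrt 2) (hν : ν = π / 2 + n * π)
    (α β : ℂ) (hαβ : ‖α‖ ^ 2 + ‖β‖ ^ 2 = 1) (x : ℝ) :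
    Tendsto (fun t : ℕ => ∑' y : ℤ, if (y : ℝ) ≤ x * t then qprob ρ ν α β t y else 0)
      atTop (𝓝 (∫ y in Set.Iic x, densStd n α β y)) := by
  have hρ' : ρ ^ 2 ≤ 1 := by
    rw [sq_eq_half hρ]
    norm_num
  have := isProbabilityMeasure_rescaledLaw ν hρ' hαβ
  have := isProbabilityMeasure_limitLaw n hαβ
  have hcharFun (ξ : ℝ) : Tendsto (fun t => charFun (rescaledLaw ρ ν α β t) ξ) atTop
      (𝓝 (charFun (limitLaw n α β) ξ)) := by
    rw [charFun_limitLaw n hαβ]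
    exact tendsto_charFun_rescaledLaw hρ hν hαβ ξ
  rw [← limitLaw_real_Iic n hαβ]
  refine (tendsto_measureReal_Iic_of_tendsto_charFun hcharFun x).congr' ?_
  filter_upwards [eventually_gt_atTop 0] with t ht
  exact rescaledLaw_real_Iic ρ ν α β ht x

end
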